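/- Let R be a prime Noetherian right fully bounded ring, M = R/A a cyclic uniform right R-module with assassinator prime q and Kdim(M) = m. Then every cyclic critical submodule W = R/B of M has annihilator exactly q and is a fully faithful right R/q-module, and Kdim(W) = Kdim(R/q). -/

import Mathlib

open MulOpposite
universe u

/-- Gabriel–Rentschler deviation: `DevLE α P` means the deviation of the
poset `P` is at most `α`. -/
def DevLE : Ordinal.{u} → (P : Type u) → [inst : PartialOrder P] → Prop :=
  fun α P _ =>
    ∀ f : ℕ → P, (∀ n, f (n + 1) ≤ f n) →
      ∃ N : ℕ, ∀ n, N ≤ n →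
        f (n + 1) = f n ∨ ∃ β, ∃ _ : β < α, DevLE β (Set.Icc (f (n + 1)) (f n))
termination_by α => α

/-- Right ideals of `R`, as submodules of `R` viewed as a right module. -/
abbrev RightIdeal (R : Type u) [Ring R] : Type u := Submodule Rᵐᵒᵖ R

/-- Gabriel–Rentschler Krull dimension of a right `R`-module `M`
(least `α` bounding the deviation of the submodule lattice; junk value `0`
if no such ordinal exists). -/
noncomputable def rKdim (R : Type u) [Ring R] (M : Type u) [AddCommGroup M]
    [Module Rᵐᵒᵖ M] : Ordinal.{u} :=
  sInf {α : Ordinal.{u} | DevLE α (Submodule Rᵐᵒᵖ M)}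

/-- `x⁻¹(I) = {a | x * a ∈ I}`, a right ideal. -/
def preIdeal {R : Type u} [Ring R] (x : R) (I : RightIdeal R) : RightIdeal R where
  carrier := {a : R | x * a ∈ I}
  add_mem' := by intro a b ha hb; simpa [mul_add] using add_mem ha hb
  zero_mem' := by simp
  smul_mem' := by
    intro r a ha
    show x * (op (unop r) • a) ∈ I
    rw [op_smul_eq_mul, ← mul_assoc]
    exact I.smul_mem r ha

/-- `S` is a right Ore set. -/
def RightOre {R : Type u} [Ring R] (S : Set R) : Prop :=
  ∀ r : R, ∀ s ∈ S, ∃ r' : R, ∃ s' ∈ S, r * s' = s * r'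

/-- A multiplicatively closed set. -/
def MulClosed {R : Type u} [Ring R] (S : Set R) : Prop :=
  ∀ a ∈ S, ∀ b ∈ S, a * b ∈ S

/-- A Gabriel filter of right ideals. -/
def IsGabrielFilter {R : Type u} [Ring R] (F : Set (RightIdeal R)) : Prop :=
  (∀ I ∈ F, ∀ J : RightIdeal R, I ≤ J → J ∈ F) ∧
  (∀ I ∈ F, ∀ J ∈ F, I ⊓ J ∈ F) ∧
  (∀ I ∈ F, ∀ x : R, preIdeal x I ∈ F)

/-- A right ideal that is two-sided. -/
def TwoSided {R : Type u} [Ring R] (I : RightIdeal R) : Prop :=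
  ∀ r : R, ∀ x ∈ I, r * x ∈ I

/-- A (two-sided) prime ideal of a possibly noncommutative ring. -/
def IsPrimeIdeal {R : Type u} [Ring R] (p : RightIdeal R) : Prop :=
  TwoSided p ∧ p ≠ ⊤ ∧ ∀ a b : R, (∀ r : R, a * r * b ∈ p) → a ∈ p ∨ b ∈ p

/-- `C(p)`: the elements of `R` regular modulo `p`. -/
def CMod {R : Type u} [Ring R] (p : RightIdeal R) : Set R :=
  {c : R | (∀ a : R, c * a ∈ p → a ∈ p) ∧ (∀ a : R, a * c ∈ p → a ∈ p)}

/-- A prime ring. -/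
def IsPrimeRing (R : Type u) [Ring R] : Prop :=
  ∀ a b : R, (∀ r : R, a * r * b = 0) → a = 0 ∨ b = 0

/-- A right module is `V`-torsion. -/
def IsTorsionBy' {R : Type u} [Ring R] (V : Set R) (M : Type u) [AddCommGroup M]
    [Module Rᵐᵒᵖ M] : Prop :=
  ∀ x : M, ∃ v ∈ V, op v • x = 0

/-- The annihilator (as a set) of a right module. -/
def annSet (R : Type u) [Ring R] (M : Type u) [AddCommGroup M] [Module Rᵐᵒᵖ M] :
    Set R :=
  {a : R | ∀ x : M, op a • x = 0}

/-- `R` is right fully bounded: in every prime factor, every essential right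
ideal contains a nonzero two-sided ideal. -/
def RightFullyBounded (R : Type u) [Ring R] : Prop :=
  ∀ p : RightIdeal R, IsPrimeIdeal p →
    ∀ I : RightIdeal R, p ≤ I →
      (∀ J : RightIdeal R, p < J → p < I ⊓ J) →
      ∃ A : RightIdeal R, TwoSided A ∧ p < A ∧ A ≤ I

/-- A uniform right module: any two nonzero submodules intersect nontrivially. -/
def IsUniformMod (R : Type u) [Ring R] (M : Type u) [AddCommGroup M]
    [Module Rᵐᵒᵖ M] : Prop :=
  ∀ N N' : Submodule Rᵐᵒᵖ M, N ≠ ⊥ → N' ≠ ⊥ → N ⊓ N' ≠ ⊥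

/-- The annihilator (as a set of elements of `R`) of a submodule. -/
def annSubSet (R : Type u) [Ring R] {M : Type u} [AddCommGroup M]
    [Module Rᵐᵒᵖ M] (N : Submodule Rᵐᵒᵖ M) : Set R :=
  {a : R | ∀ x ∈ N, op a • x = 0}

/-- `q` is an associated (assassinator) prime of the right module `M`:
`q` is prime and is the annihilator of a nonzero submodule all of whose
nonzero submodules also have annihilator `q`. -/
def IsAssocPrime (R : Type u) [Ring R] (q : RightIdeal R) (M : Type u)
    [AddCommGroup M] [Module Rᵐᵒᵖ M] : Prop :=
  IsPrimeIdeal q ∧ ∃ N : Submodule Rᵐᵒᵖ M, N ≠ ⊥ ∧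
    ∀ N' : Submodule Rᵐᵒᵖ M, N' ≤ N → N' ≠ ⊥ → annSubSet R N' = (q : Set R)

/-- A critical right module: nonzero, and every proper quotient has strictly
smaller Krull dimension. -/
def IsCriticalMod (R : Type u) [Ring R] (M : Type u) [AddCommGroup M]
    [Module Rᵐᵒᵖ M] : Prop :=
  Nontrivial M ∧
    ∀ N : Submodule Rᵐᵒᵖ M, N ≠ ⊥ → rKdim R (M ⧸ N) < rKdim R M

/-- `M` is a fully faithful right `R/q`-module: `q` annihilates `M` and every
nonzero submodule of `M` has annihilator exactly `q`. -/
def FullyFaithfulOver (R : Type u) [Ring R] (q : RightIdeal R) (M : Type u)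
    [AddCommGroup M] [Module Rᵐᵒᵖ M] : Prop :=
  (q : Set R) ⊆ annSet R M ∧
    ∀ N : Submodule Rᵐᵒᵖ M, N ≠ ⊥ → annSubSet R N = (q : Set R)

/-!
Over a right fully bounded ring `R`, Krull dimension passes from left to right through an
`S`-`R`-bimodule `X` which is Noetherian on both sides: `Kdim X_R ≤ Kdim (S / l.ann X)`. By
induction on the dimension one reduces to `X` with prime annihilators on both sides. There every
nonzero sub-bimodule contains some `h X` with `h ∉ l.ann X`, so that factors by sub-bimodules have
smaller dimension; by boundedness every essential submodule contains a nonzero sub-bimodule; and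
a module all of whose factors by essential submodules have deviation `< β` has deviation `≤ β`.

Let `W` be critical of dimension `κ` and `0 ≠ N ⊆ W` with `N q = 0`. The ring `R / ann (W / N)` has
dimension `< κ`, and `ann (W / N)` kills `q / (q ∩ ann W)` from the left, so `(q / (q ∩ ann W))_R`
has dimension `< κ`. So has its image `w q` for every `w ∈ W`, whence `w q = 0` because `W` is
critical. Thus `W` is an `R / q`-module, fully faithful since `W` is uniform. Finally, by
boundedness, no annihilator of `w ≠ 0` is essential over `q`, so that `W` contains a copy of a
nonzero right ideal of `R / q`, which gives `Kdim (R / q) ≤ Kdim W`.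
-/

/-! ### Deviation -/

/-- The deviation of `P` is strictly less than `α`, where a poset without strict inequalities
has deviation `-∞` (so it counts even for `α = 0`). -/
def DevLT (α : Ordinal.{u}) (P : Type u) [PartialOrder P] : Prop :=
  (∀ x y : P, ¬ x < y) ∨ ∃ β < α, DevLE β P

theorem devLE_iff_antitone {α : Ordinal.{u}} {P : Type u} [PartialOrder P] :
    DevLE α P ↔ ∀ f : ℕ → P, Antitone f →
      ∃ N, ∀ n, N ≤ n → DevLT α (Set.Icc (f (n + 1)) (f n)) := by
  have trivial_iff : ∀ {x y : P}, x ≤ y → ((∀ z w : Set.Icc x y, ¬ z < w) ↔ x = y) := by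
    intro x y hxy
    constructor
    · intro h
      by_contra hne
      exact h ⟨x, le_rfl, hxy⟩ ⟨y, hxy, le_rfl⟩ (Subtype.mk_lt_mk.2 (hxy.lt_of_ne hne))
    · rintro rfl z w hzw
      exact hzw.not_ge (Subtype.coe_le_coe.1 (w.2.2.trans z.2.1))
  rw [DevLE]
  simp only [exists_prop]
  constructor
  · intro h f hf
    obtain ⟨N, hN⟩ := h f fun n => hf n.le_succ
    exact ⟨N, fun n hn => (hN n hn).imp_left (trivial_iff (hf n.le_succ)).2⟩
  · intro h f hf
    obtain ⟨N, hN⟩ := h f (antitone_nat_of_succ_le hf)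
    exact ⟨N, fun n hn => (hN n hn).imp_left (trivial_iff (hf n)).1⟩

theorem DevLT.mono {α β : Ordinal.{u}} {P : Type u} [PartialOrder P] (h : DevLT α P)
    (hαβ : α ≤ β) : DevLT β P :=
  h.imp_right fun ⟨γ, hγ, hP⟩ => ⟨γ, hγ.trans_le hαβ, hP⟩

theorem DevLE.mono {α β : Ordinal.{u}} {P : Type u} [PartialOrder P] (h : DevLE α P)
    (hαβ : α ≤ β) : DevLE β P := by
  rw [devLE_iff_antitone] at h ⊢
  intro f hf
  obtain ⟨N, hN⟩ := h f hf
  exact ⟨N, fun n hn => (hN n hn).mono hαβ⟩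

theorem devLE_of_forall_not_lt {α : Ordinal.{u}} {P : Type u} [PartialOrder P]
    (h : ∀ x y : P, ¬ x < y) : DevLE α P :=
  devLE_iff_antitone.2 fun _ _ => ⟨0, fun _ _ => .inl fun x y => h x y⟩

theorem devLT_succ_iff {α : Ordinal.{u}} {P : Type u} [PartialOrder P] :
    DevLT (Order.succ α) P ↔ DevLE α P := by
  constructor
  · rintro (h | ⟨β, hβ, h⟩)
    · exact devLE_of_forall_not_lt h
    · exact h.mono (Order.lt_succ_iff.1 hβ)
  · exact fun h => .inr ⟨α, Order.lt_succ α, h⟩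

theorem DevLT.of_strictMono {α : Ordinal.{u}} {P Q : Type u} [PartialOrder P] [PartialOrder Q]
    (h : DevLT α P) {g : Q → P} (hg : StrictMono g) : DevLT α Q := by
  induction α using WellFoundedLT.induction generalizing P Q with
  | ind α ih =>
    rcases h with h | ⟨β, hβ, hP⟩
    · exact .inl fun x y hxy => h _ _ (hg hxy)
    · refine .inr ⟨β, hβ, ?_⟩
      rw [devLE_iff_antitone] at hP ⊢
      intro f hf
      obtain ⟨N, hN⟩ := hP (g ∘ f) (hg.monotone.comp_antitone hf)
      refine ⟨N, fun n hn => ih β hβ (hN n hn)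
        (g := fun x => ⟨g x, hg.monotone x.2.1, hg.monotone x.2.2⟩) ?_⟩
      exact fun x y hxy => hg (Subtype.coe_lt_coe.2 hxy)

theorem DevLE.of_strictMono {α : Ordinal.{u}} {P Q : Type u} [PartialOrder P] [PartialOrder Q]
    (h : DevLE α P) {g : Q → P} (hg : StrictMono g) : DevLE α Q :=
  devLT_succ_iff.1 ((devLT_succ_iff.2 h).of_strictMono hg)

theorem devLE_congr {α : Ordinal.{u}} {P Q : Type u} [PartialOrder P] [PartialOrder Q]
    (e : P ≃o Q) : DevLE α P ↔ DevLE α Q :=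
  ⟨fun h => h.of_strictMono e.symm.strictMono, fun h => h.of_strictMono e.strictMono⟩

theorem DevLT.prod {α : Ordinal.{u}} {P Q : Type u} [PartialOrder P] [PartialOrder Q]
    (hP : DevLT α P) (hQ : DevLT α Q) : DevLT α (P × Q) := by
  induction α using WellFoundedLT.induction generalizing P Q with
  | ind α ih =>
    by_cases htriv : (∀ x y : P, ¬ x < y) ∧ ∀ x y : Q, ¬ x < y
    · refine .inl fun x y hxy => ?_
      rcases Prod.lt_iff.1 hxy with h | h
      exacts [htriv.1 _ _ h.1, htriv.2 _ _ h.2]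
    obtain ⟨β, hβ, hPβ, hQβ⟩ : ∃ β < α, DevLE β P ∧ DevLE β Q := by
      rcases hP with hP | ⟨β, hβ, hP⟩ <;> rcases hQ with hQ | ⟨γ, hγ, hQ⟩
      · exact absurd ⟨hP, hQ⟩ htriv
      · exact ⟨γ, hγ, devLE_of_forall_not_lt hP, hQ⟩
      · exact ⟨β, hβ, hP, devLE_of_forall_not_lt hQ⟩
      · exact ⟨max β γ, max_lt hβ hγ, hP.mono (le_max_left _ _), hQ.mono (le_max_right _ _)⟩
    refine .inr ⟨β, hβ, ?_⟩
    rw [devLE_iff_antitone] at hPβ hQβ ⊢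
    intro f hf
    obtain ⟨N, hN⟩ := hPβ (fun n => (f n).1) fun _ _ h => (hf h).1
    obtain ⟨N', hN'⟩ := hQβ (fun n => (f n).2) fun _ _ h => (hf h).2
    refine ⟨max N N', fun n hn => (ih β hβ (hN n ((le_max_left _ _).trans hn))
      (hN' n ((le_max_right _ _).trans hn))).of_strictMono
      (g := fun x => (⟨x.1.1, x.2.1.1, x.2.2.1⟩, ⟨x.1.2, x.2.1.2, x.2.2.2⟩)) ?_⟩
    exact fun x y hxy => Prod.lt_iff.2 ((Prod.lt_iff.1 (Subtype.coe_lt_coe.2 hxy)).imp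
      (fun h => ⟨h.1, h.2⟩) fun h => ⟨h.1, h.2⟩)

theorem exists_devLE_Ici {P : Type u} [PartialOrder P] [WellFoundedGT P] (a : P) :
    ∃ α, DevLE α (Set.Ici a) := by
  induction a using WellFoundedGT.induction with
  | ind a ih =>
    choose F hF using fun b : Set.Ioi a => ih b.1 b.2
    refine ⟨⨆ b, F b + 1, devLE_iff_antitone.2 fun f hf => ?_⟩
    by_cases h : ∃ N, (f N : P) = a
    · obtain ⟨N, hN⟩ := h
      have hconst : ∀ n, N ≤ n → (f n : P) = a := fun n hn =>
        le_antisymm ((Subtype.coe_le_coe.2 (hf hn)).trans_eq hN) (f n).2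
      refine ⟨N, fun n hn => .inl fun x y hxy => ?_⟩
      have hya : (y.1 : P) ≤ a := (Subtype.coe_le_coe.2 y.2.2).trans_eq (hconst n hn)
      exact hxy.not_ge (hya.trans x.1.2 : (y.1 : P) ≤ x.1)
    · have hlt : ∀ n, a < f n := fun n => (f n).2.lt_of_ne fun e => h ⟨n, e.symm⟩
      refine ⟨0, fun n _ => .inr ⟨_, Ordinal.lt_iSup_add_one F ⟨_, hlt (n + 1)⟩, ?_⟩⟩
      exact (hF ⟨_, hlt (n + 1)⟩).of_strictMono
        (g := fun x => ⟨x.1, x.2.1⟩) fun _ _ hxy => hxy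

theorem exists_devLE (P : Type u) [PartialOrder P] [OrderBot P] [WellFoundedGT P] :
    ∃ α, DevLE α P :=
  (exists_devLE_Ici (⊥ : P)).imp fun _ h =>
    h.of_strictMono (g := fun x => ⟨x, bot_le⟩) fun _ _ hxy => hxy

/-! ### Intervals in modular lattices -/

section Intervals

variable {α : Ordinal.{u}} {L : Type u}

theorem DevLT.Icc_mono [PartialOrder L] {a b a' b' : L} (h : DevLT α (Set.Icc a b))
    (ha : a ≤ a') (hb : b' ≤ b) : DevLT α (Set.Icc a' b') :=
  h.of_strictMono (g := fun x => ⟨x, ha.trans x.2.1, x.2.2.trans hb⟩) fun _ _ hxy => hxy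

theorem devLT_Icc_of_le [PartialOrder L] {a b : L} (h : b ≤ a) : DevLT α (Set.Icc a b) :=
  .inl fun x y hxy => hxy.not_ge (y.2.2.trans (h.trans x.2.1))

theorem devLE_Icc_iff_antitone [PartialOrder L] {a b : L} :
    DevLE α (Set.Icc a b) ↔ ∀ f : ℕ → L, Antitone f → (∀ n, f n ∈ Set.Icc a b) →
      ∃ N, ∀ n, N ≤ n → DevLT α (Set.Icc (f (n + 1)) (f n)) := by
  rw [devLE_iff_antitone]
  constructor
  · intro h f hf hmem
    obtain ⟨N, hN⟩ := h (fun n => ⟨f n, hmem n⟩) hf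
    refine ⟨N, fun n hn => (hN n hn).of_strictMono (g := fun x =>
      ⟨⟨x, (hmem _).1.trans x.2.1, x.2.2.trans (hmem _).2⟩, x.2⟩) fun _ _ hxy => hxy⟩
  · intro h f hf
    obtain ⟨N, hN⟩ := h (fun n => f n) hf fun n => (f n).2
    exact ⟨N, fun n hn => (hN n hn).of_strictMono (g := fun x => ⟨x.1, x.2⟩) fun _ _ hxy => hxy⟩

theorem devLE_Icc_bot_top_iff [PartialOrder L] [BoundedOrder L] :
    DevLE α (Set.Icc (⊥ : L) ⊤) ↔ DevLE α L :=
  ⟨fun h => h.of_strictMono (g := fun x => ⟨x, bot_le, le_top⟩) fun _ _ hxy => hxy,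
    fun h => h.of_strictMono (g := Subtype.val) fun _ _ hxy => hxy⟩

theorem exists_critical_Icc [PartialOrder L] {a b : L} (hab : a < b)
    (h : DevLE α (Set.Icc a b)) :
    ∃ u, a < u ∧ u ≤ b ∧ ∀ v, a < v → v ≤ u → DevLT α (Set.Icc v u) := by
  by_contra! hno
  choose! next hnext using hno
  have hmem : ∀ n, a < next^[n] b ∧ next^[n] b ≤ b := by
    intro n
    induction n with
    | zero => exact ⟨hab, le_rfl⟩
    | succ n ih =>
      rw [Function.iterate_succ_apply']
      exact ⟨(hnext _ ih.1 ih.2).1, (hnext _ ih.1 ih.2).2.1.trans ih.2⟩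
  obtain ⟨N, hN⟩ := devLE_Icc_iff_antitone.1 h (fun n => next^[n] b)
    (antitone_nat_of_succ_le fun n => by
      rw [Function.iterate_succ_apply']
      exact (hnext _ (hmem n).1 (hmem n).2).2.1)
    fun n => ⟨(hmem n).1.le, (hmem n).2⟩
  have hlt := hN N le_rfl
  rw [Function.iterate_succ_apply'] at hlt
  exact (hnext _ (hmem N).1 (hmem N).2).2.2 hlt

theorem induction_Icc_of_exists_gt [PartialOrder L] [WellFoundedGT L] {P : L → Prop} {a b : L}
    (hab : a ≤ b) (base : P a)
    (step : ∀ n, a ≤ n → n < b → P n → ∃ n', n < n' ∧ n' ≤ b ∧ P n') : P b := by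
  obtain ⟨n, ⟨han, hnb, hPn⟩, hmax⟩ :=
    exists_maximal_of_wellFoundedGT (fun n => a ≤ n ∧ n ≤ b ∧ P n) ⟨a, le_rfl, hab, base⟩
  obtain rfl | hlt := hnb.eq_or_lt
  · exact hPn
  · obtain ⟨n', hn, hn'b, hPn'⟩ := step n han hlt hPn
    exact absurd (hmax ⟨han.trans hn.le, hn'b, hPn'⟩ hn.le) hn.not_ge

variable [Lattice L] [IsModularLattice L]

theorem DevLT.Icc_trans {a b c : L} (hab : DevLT α (Set.Icc a b)) (hbc : DevLT α (Set.Icc b c))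
    (h : a ≤ b) (h' : b ≤ c) : DevLT α (Set.Icc a c) := by
  refine (hab.prod hbc).of_strictMono (g := fun x => (⟨x.1 ⊓ b, le_inf x.2.1 h, inf_le_right⟩,
    ⟨x.1 ⊔ b, le_sup_right, sup_le x.2.2 h'⟩)) fun x y hxy => ?_
  have hle : (x : L) ≤ y := hxy.le
  refine lt_of_le_of_ne ⟨inf_le_inf_right b hle, sup_le_sup_right hle b⟩ fun heq => hxy.ne ?_
  have hinf : (y : L) ⊓ b = (x : L) ⊓ b := congrArg (fun p => (p.1 : L)) heq.symm
  have hsup : (y : L) ⊔ b = (x : L) ⊔ b := congrArg (fun p => (p.2 : L)) heq.symm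
  exact Subtype.ext (eq_of_le_of_inf_le_of_sup_le hle hinf.le hsup.le)

theorem DevLT.Icc_sup_left {a b : L} (h : DevLT α (Set.Icc a b)) (hab : a ≤ b) (c : L) :
    DevLT α (Set.Icc (c ⊔ a) (c ⊔ b)) := by
  have h' : DevLT α (Set.Icc (b ⊓ (c ⊔ a)) b) := h.Icc_mono (le_inf hab le_sup_right) le_rfl
  have heq : c ⊔ b = b ⊔ (c ⊔ a) := by rw [sup_left_comm, sup_of_le_left hab]
  rw [heq]
  exact h'.of_strictMono (infIccOrderIsoIccSup b (c ⊔ a)).symm.strictMono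

theorem DevLT.Icc_inf_left {a b : L} (h : DevLT α (Set.Icc a b)) (hab : a ≤ b) (c : L) :
    DevLT α (Set.Icc (c ⊓ a) (c ⊓ b)) := by
  have h' : DevLT α (Set.Icc a ((c ⊓ b) ⊔ a)) := h.Icc_mono le_rfl (sup_le inf_le_right hab)
  have heq : c ⊓ a = (c ⊓ b) ⊓ a := by rw [inf_assoc, inf_of_le_right hab]
  rw [heq]
  exact h'.of_strictMono (infIccOrderIsoIccSup (c ⊓ b) a).strictMono

theorem DevLT.Icc_finsetInf_top [OrderTop L] {ι : Type*} {t : Finset ι} {N : ι → L}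
    (h : ∀ i ∈ t, DevLT α (Set.Icc (N i) ⊤)) : DevLT α (Set.Icc (t.inf N) ⊤) := by
  classical
  induction t using Finset.induction with
  | empty => exact devLT_Icc_of_le le_rfl
  | insert i t _ ih =>
    rw [Finset.inf_insert]
    have ht := ih fun j hj => h j (Finset.mem_insert_of_mem hj)
    have hi := ht.Icc_inf_left le_top (N i)
    rw [inf_top_eq] at hi
    exact hi.Icc_trans (h i (Finset.mem_insert_self i t)) inf_le_left le_top

/-- `e` is essential in the interval `[a, b]`: it meets every `z ∈ (a, b]` strictly above `a`. -/
def IsEssentialIn (a b e : L) : Prop :=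
  ∀ z, a < z → z ≤ b → a < e ⊓ z

theorem devLE_Icc_of_essential [WellFoundedGT L] {a b : L}
    (h : ∀ e, a ≤ e → e ≤ b → IsEssentialIn a b e → DevLT α (Set.Icc e b)) :
    DevLE α (Set.Icc a b) := by
  refine devLE_Icc_iff_antitone.2 fun f hf hmem => ?_
  have hab : a ≤ b := (hmem 0).1.trans (hmem 0).2
  -- `Y` is a maximal element which avoids some `f m` (modulo `a`); then `Y ⊔ f n` is essential.
  obtain ⟨Y, ⟨haY, hYb, m, hYm⟩, hmax⟩ := exists_maximal_of_wellFoundedGT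
    (fun Y => a ≤ Y ∧ Y ≤ b ∧ ∃ m, Y ⊓ f m ≤ a) ⟨a, le_rfl, hab, 0, inf_le_left⟩
  have hYf : ∀ n, m ≤ n → Y ⊓ f n ≤ a := fun n hn => (inf_le_inf_left Y (hf hn)).trans hYm
  refine ⟨m, fun n hn => ?_⟩
  have hess : IsEssentialIn a b (Y ⊔ f (n + 1)) := by
    intro z haz hzb
    refine (le_inf (haY.trans le_sup_left) haz.le).lt_of_not_ge fun hle => haz.not_ge ?_
    have hcap : (Y ⊔ z) ⊓ f (n + 1) ≤ Y := calc
      (Y ⊔ z) ⊓ f (n + 1) ≤ (Y ⊔ z) ⊓ (Y ⊔ f (n + 1)) := inf_le_inf_left _ le_sup_right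
      _ = Y ⊔ z ⊓ (Y ⊔ f (n + 1)) := sup_inf_assoc_of_le z le_sup_left
      _ ≤ Y := sup_le le_rfl ((inf_comm z _).le.trans (hle.trans haY))
    have hYz : Y ⊔ z ≤ Y := hmax ⟨haY.trans le_sup_left, sup_le hYb hzb, n + 1,
      (le_inf hcap inf_le_right).trans (hYf _ (by omega))⟩ le_sup_left
    exact (le_inf ((le_sup_right.trans hYz).trans le_sup_left) le_rfl).trans hle
  have hlt := ((h _ (haY.trans le_sup_left) (sup_le hYb (hmem _).2) hess).Icc_inf_left
    (sup_le hYb (hmem _).2) (f n)).Icc_mono (b' := f n) le_rfl (le_inf le_rfl (hmem n).2)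
  have hcap : f n ⊓ (Y ⊔ f (n + 1)) ≤ f (n + 1) := by
    rw [sup_comm, inf_comm, sup_inf_assoc_of_le Y (hf n.le_succ)]
    exact sup_le le_rfl ((hYf n hn).trans (hmem _).1)
  exact hlt.Icc_mono hcap le_rfl

theorem finsetInf_sup_le [OrderTop L] {ι : Type*} [DecidableEq ι] {t s : Finset ι} (hs : s ⊆ t)
    (e : L) (k : ι → L) :
    s.inf (fun u => (e ⊓ (t.erase u).inf k) ⊔ k u) ≤ (e ⊓ (t \ s).inf k) ⊔ s.inf k := by
  induction s using Finset.induction with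
  | empty => simp
  | insert i s hi ih =>
    have herase : (t.erase i).inf k = (t \ insert i s).inf k ⊓ s.inf k := by
      rw [← Finset.inf_union]
      congr 1
      grind
    have hsdiff : (t \ s).inf k = (t \ insert i s).inf k ⊓ k i := by
      rw [inf_comm, ← Finset.inf_insert]
      congr 1
      grind
    have ih' := ih ((Finset.subset_insert i s).trans hs)
    rw [hsdiff, ← inf_assoc] at ih'
    rw [Finset.inf_insert, Finset.inf_insert, herase, ← inf_assoc]
    set A := e ⊓ (t \ insert i s).inf k
    set K := s.inf k
    calc
      _ ≤ (A ⊓ K ⊔ k i) ⊓ (A ⊓ k i ⊔ K) := inf_le_inf_left _ ih'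
      _ = A ⊓ K ⊔ k i ⊓ (A ⊓ k i ⊔ K) :=
        sup_inf_assoc_of_le _ (inf_le_right.trans le_sup_right)
      _ = A ⊓ K ⊔ (A ⊓ k i ⊔ K ⊓ k i) := by
        rw [inf_comm (k i), sup_inf_assoc_of_le _ inf_le_right]
      _ ≤ A ⊔ k i ⊓ K := sup_le (inf_le_left.trans le_sup_left)
        (sup_le_sup inf_le_left (inf_comm _ _).le)

theorem DevLT.Icc_top_of_finsetInf_le [OrderTop L] {ι : Type*} [DecidableEq ι] {t : Finset ι}
    {e : L} {k : ι → L} (hke : t.inf k ≤ e)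
    (h : ∀ u ∈ t, DevLT α (Set.Icc ((e ⊓ (t.erase u).inf k) ⊔ k u) ⊤)) :
    DevLT α (Set.Icc e ⊤) := by
  refine (DevLT.Icc_finsetInf_top h).Icc_mono ?_ le_rfl
  exact (finsetInf_sup_le subset_rfl e k).trans (sup_le inf_le_left hke)

end Intervals

/-! ### Intervals of submodules -/

section LinearMap

variable {α : Ordinal.{u}} {T : Type*} [Ring T] {X Y : Type u} [AddCommGroup X] [Module T X]
  [AddCommGroup Y] [Module T Y] {a b : Submodule T X}

theorem comap_map_sup_le (f : X →ₗ[T] Y) (x : Submodule T X) (a : Submodule T Y) :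
    (x.map f ⊔ a).comap f ≤ x ⊔ a.comap f := by
  intro v hv
  obtain ⟨_, ⟨w, hw, rfl⟩, z, hz, hwz⟩ := Submodule.mem_sup.1 hv
  refine Submodule.mem_sup.2 ⟨w, hw, v - w, ?_, add_sub_cancel w v⟩
  rwa [Submodule.mem_comap, map_sub, ← hwz, add_sub_cancel_left]

theorem DevLT.comap {a b : Submodule T Y} (h : DevLT α (Set.Icc a b)) (hab : a ≤ b)
    (f : X →ₗ[T] Y) : DevLT α (Set.Icc (a.comap f) (b.comap f)) := by
  refine h.of_strictMono (g := fun x => ⟨x.1.map f ⊔ a, le_sup_right,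
    sup_le (Submodule.map_le_iff_le_comap.2 x.2.2) hab⟩) fun x y hxy => ?_
  refine lt_of_le_of_ne (Subtype.mk_le_mk.2 (sup_le_sup_right (Submodule.map_mono hxy.le) a)) ?_
  intro heq
  refine hxy.not_ge (Subtype.coe_le_coe.1 ?_)
  calc
    y.1 ≤ (y.1.map f ⊔ a).comap f := Submodule.map_le_iff_le_comap.1 le_sup_left
    _ = (x.1.map f ⊔ a).comap f := by rw [Subtype.mk.inj heq]
    _ ≤ x.1 ⊔ a.comap f := comap_map_sup_le f x.1 a
    _ = x.1 := sup_of_le_left x.2.1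

theorem DevLT.map (h : DevLT α (Set.Icc a b)) (hab : a ≤ b) (f : X →ₗ[T] Y) :
    DevLT α (Set.Icc (a.map f) (b.map f)) := by
  have map_inf_comap : ∀ y : Submodule T Y, y ≤ b.map f → (b ⊓ y.comap f).map f = y :=
    fun y hy => Submodule.map_inf_eq_map_inf_comap.symm.trans (inf_of_le_right hy)
  refine h.of_strictMono (g := fun y => ⟨b ⊓ y.1.comap f,
    le_inf hab (Submodule.map_le_iff_le_comap.1 y.2.1), inf_le_left⟩) fun x y hxy => ?_
  refine lt_of_le_of_ne (Subtype.mk_le_mk.2 (inf_le_inf_left b (Submodule.comap_mono hxy.le))) ?_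
  intro heq
  refine hxy.ne (Subtype.ext ?_)
  rw [← map_inf_comap x x.2.2, ← map_inf_comap y y.2.2, Subtype.mk.inj heq]

theorem DevLT.Icc_of_map {a' b' : Submodule T Y} (h : DevLT α (Set.Icc a b)) (hab : a ≤ b)
    (f : X →ₗ[T] Y) (ha : a.map f ≤ a') (hb : b' ≤ a' ⊔ b.map f) : DevLT α (Set.Icc a' b') :=
  ((h.map hab f).Icc_sup_left (Submodule.map_mono hab) a').Icc_mono (sup_le le_rfl ha) hb

theorem IsEssentialIn.comap {a b e : Submodule T Y} (h : IsEssentialIn a b e) (hae : a ≤ e)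
    (hab : a ≤ b) (f : X →ₗ[T] Y) :
    IsEssentialIn (a.comap f) (b.comap f) (e.comap f) := by
  intro z haz hzb
  have hlt : a < z.map f ⊔ a := by
    refine le_sup_right.lt_of_not_ge fun hle => haz.not_ge ?_
    exact Submodule.map_le_iff_le_comap.1 (le_sup_left.trans hle)
  obtain ⟨_, ⟨hye, hyz⟩, hya⟩ := SetLike.exists_of_lt
    (h _ hlt (sup_le (Submodule.map_le_iff_le_comap.2 hzb) hab))
  obtain ⟨_, ⟨w, hw, rfl⟩, c, hc, rfl⟩ := Submodule.mem_sup.1 hyz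
  refine SetLike.lt_iff_le_and_exists.2
    ⟨le_inf (Submodule.comap_mono hae) haz.le, w,
      Submodule.mem_inf.2 ⟨?_, hw⟩, fun hwa => hya (a.add_mem hwa hc)⟩
  exact (e.add_mem_iff_left (hae hc)).1 hye

end LinearMap

/-! ### Annihilators of subquotients -/

section RightModule

variable {α : Ordinal.{u}} {R : Type u} [Ring R] {X : Type u} [AddCommGroup X] [Module Rᵐᵒᵖ X]
  {a b c : Submodule Rᵐᵒᵖ X}

/-- The map `R → X`, `r ↦ x r`; the preimage of a submodule under it is the annihilator of `x`
modulo this submodule. -/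
def orbitMap (x : X) : R →ₗ[Rᵐᵒᵖ] X where
  toFun r := op r • x
  map_add' r s := by rw [op_add, add_smul]
  map_smul' s r := by
    rw [RingHom.id_apply, smul_smul]
    rfl

theorem comap_orbitMap_eq_top {x : X} (hx : x ∈ a) : a.comap (orbitMap x) = (⊤ : RightIdeal R) :=
  eq_top_iff.2 fun r _ => a.smul_mem (op r) hx

/-- The annihilator in `R` of the subquotient `(b + a) / a` of a right module. -/
def rightAnn (a b : Submodule Rᵐᵒᵖ X) : RightIdeal R where
  carrier := {r | ∀ x ∈ b, op r • x ∈ a}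
  add_mem' hr hs x hx := by
    rw [op_add, add_smul]
    exact a.add_mem (hr x hx) (hs x hx)
  zero_mem' x _ := by simp
  smul_mem' s r hr x hx := by
    rw [← op_unop s, op_smul_eq_mul, op_smul_mul]
    exact a.smul_mem _ (hr x hx)

theorem mem_rightAnn {r : R} : r ∈ rightAnn a b ↔ ∀ x ∈ b, op r • x ∈ a := Iff.rfl

theorem twoSided_rightAnn : TwoSided (rightAnn a b) := fun r s hs x hx => by
  rw [op_smul_mul]
  exact hs _ (b.smul_mem _ hx)

theorem rightAnn_antitone : Antitone (rightAnn a) := fun _ _ h _ hr x hx => hr x (h hx)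

theorem rightAnn_eq_top_iff : rightAnn a b = ⊤ ↔ b ≤ a := by
  refine ⟨fun h x hx => ?_, fun h => eq_top_iff.2 fun r _ x hx => a.smul_mem _ (h hx)⟩
  simpa using (h.ge trivial : (1 : R) ∈ rightAnn a b) x hx

theorem TwoSided.le_rightAnn_span {A : RightIdeal R} (hA : TwoSided A) {t : Set X}
    (h : ∀ x ∈ t, A ≤ a.comap (orbitMap x)) : A ≤ rightAnn a (Submodule.span Rᵐᵒᵖ t) := by
  suffices hspan : ∀ x ∈ Submodule.span Rᵐᵒᵖ t, ∀ r ∈ A, op r • x ∈ a from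
    fun r hr x hx => hspan x hx r hr
  intro x hx
  induction hx using Submodule.span_induction with
  | mem x hx => exact fun r hr => h x hx hr
  | zero => simp
  | add y z _ _ hy hz =>
    intro r hr
    rw [smul_add]
    exact a.add_mem (hy r hr) (hz r hr)
  | smul s y _ hy =>
    intro r hr
    rw [← op_unop s, ← op_smul_mul]
    exact hy _ (hA _ r hr)

theorem DevLT.of_le_rightAnn [IsNoetherian Rᵐᵒᵖ X] {Q : RightIdeal R}
    (h : DevLT α (Set.Icc Q ⊤)) (hQ : Q ≤ rightAnn a b) (hab : a ≤ b) :
    DevLT α (Set.Icc a b) := by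
  refine induction_Icc_of_exists_gt (P := fun n => DevLT α (Set.Icc a n)) hab
    (devLT_Icc_of_le le_rfl) ?_
  intro n han hnb hn
  obtain ⟨w, hwb, hwn⟩ := SetLike.exists_of_lt hnb
  have hQw : Q.map (orbitMap w) ≤ n := by
    rintro _ ⟨r, hr, rfl⟩
    exact han (hQ hr w hwb)
  have hwtop : (⊤ : RightIdeal R).map (orbitMap w) ≤ b := by
    rintro _ ⟨r, -, rfl⟩
    exact b.smul_mem (op r) hwb
  have hw : w ∈ (⊤ : RightIdeal R).map (orbitMap w) := ⟨1, trivial, one_smul _ w⟩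
  exact ⟨n ⊔ (⊤ : RightIdeal R).map (orbitMap w),
    le_sup_left.lt_of_not_ge fun hle => hwn (hle (Submodule.mem_sup_right hw)),
    sup_le hnb.le hwtop,
    hn.Icc_trans (h.Icc_of_map le_top _ hQw le_rfl) han le_sup_left⟩

theorem DevLT.rightAnn_trans [IsNoetherian Rᵐᵒᵖ R]
    (hab : DevLT α (Set.Icc (rightAnn a b) ⊤)) (hbc : DevLT α (Set.Icc (rightAnn b c) ⊤))
    (h : a ≤ b) : DevLT α (Set.Icc (rightAnn a c) ⊤) := by
  have hle : rightAnn a c ≤ rightAnn b c := fun r hr x hx => h (hr x hx)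
  refine DevLT.Icc_trans (hab.of_le_rightAnn (fun s hs r hr x hx => ?_) hle) hbc hle le_top
  rw [op_smul_eq_mul, op_smul_mul]
  exact hs _ (hr x hx)

end RightModule

/-! ### Sub-bimodules -/

section Bimodule

variable {α : Ordinal.{u}} {R : Type u} [Ring R] {X : Type u} [AddCommGroup X]
  [Module Rᵐᵒᵖ X] {C D G : Submodule Rᵐᵒᵖ X}

section RightAnn

variable (T : Type*) [Ring T] [Module T X]

/-- A submodule of a `T`-`R`-bimodule which is stable under `T`. Right modules are included as
`ℤ`-`R`-bimodules. -/
def IsSubbimodule (G : Submodule Rᵐᵒᵖ X) : Prop :=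
  ∀ t : T, ∀ x ∈ G, t • x ∈ G

/-- The sub-bimodules `G` with `C < G ≤ D`, that is, the nonzero sub-bimodules of `D / C`. -/
def subbimoduleIoc (C D : Submodule Rᵐᵒᵖ X) : Set (Submodule Rᵐᵒᵖ X) :=
  {G | IsSubbimodule T G ∧ C < G ∧ G ≤ D}

variable {T}

theorem isSubbimodule_int (G : Submodule Rᵐᵒᵖ X) : IsSubbimodule ℤ G :=
  fun n _ hx => zsmul_mem hx n

theorem IsSubbimodule.inf {G G' : Submodule Rᵐᵒᵖ X} (h : IsSubbimodule T G)
    (h' : IsSubbimodule T G') : IsSubbimodule T (G ⊓ G') :=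
  fun t x hx => ⟨h t x hx.1, h' t x hx.2⟩

theorem subbimoduleIoc_mono (h : G ≤ D) : subbimoduleIoc T C G ⊆ subbimoduleIoc T C D :=
  fun _ hG => ⟨hG.1, hG.2.1, hG.2.2.trans h⟩

theorem exists_mem_subbimoduleIoc_eq_of_antitone {L : Type*} [PartialOrder L] [WellFoundedGT L]
    {F : Submodule Rᵐᵒᵖ X → L} (hF : Antitone F) (hD : IsSubbimodule T D) (hCD : C < D) :
    ∃ G ∈ subbimoduleIoc T C D, ∀ G' ∈ subbimoduleIoc T C G, F G' = F G := by
  obtain ⟨G, hG, hmax⟩ :=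
    exists_maximalFor_of_wellFoundedGT (· ∈ subbimoduleIoc T C D) F ⟨D, hD, hCD, le_rfl⟩
  exact ⟨G, hG, fun G' hG' => le_antisymm
    (hmax (subbimoduleIoc_mono hG.2.2 hG') (hF hG'.2.2)) (hF hG'.2.2)⟩

variable [SMulCommClass T Rᵐᵒᵖ X]

theorem exists_finsetInf_le_rightAnn [IsNoetherian T X] (hC : IsSubbimodule T C) :
    ∃ t : Finset X, ↑t ⊆ (D : Set X) ∧ t.inf (fun d => C.comap (orbitMap d)) ≤ rightAnn C D := by
  obtain ⟨t, htD, hspan⟩ := Submodule.fg_span_iff_fg_span_finset_subset (R := T) (D : Set X) |>.1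
    (IsNoetherian.noetherian _)
  refine ⟨t, htD, fun r hr x hx => ?_⟩
  have hxt : x ∈ Submodule.span T (t : Set X) := hspan ▸ Submodule.subset_span hx
  clear hx
  induction hxt using Submodule.span_induction with
  | mem d hd => exact Submodule.mem_finsetInf.1 hr d hd
  | zero => simp
  | add y z _ _ hy hz =>
    rw [smul_add]
    exact C.add_mem hy hz
  | smul s y _ hy =>
    rw [← smul_comm]
    exact hC s _ hy

theorem DevLT.rightAnn [IsNoetherian T X] (h : DevLT α (Set.Icc C D)) (hCD : C ≤ D)
    (hC : IsSubbimodule T C) : DevLT α (Set.Icc (rightAnn C D) ⊤) := by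
  obtain ⟨t, htD, ht⟩ := exists_finsetInf_le_rightAnn (D := D) hC
  refine (DevLT.Icc_finsetInf_top fun d hd => ?_).Icc_mono ht le_rfl
  rw [← comap_orbitMap_eq_top (htD hd)]
  exact h.comap hCD _

/-- The residual `{x | x R y ⊆ C}`; when `C` is a sub-bimodule it witnesses that maximal right
annihilators are prime. -/
def rightResidual (C : Submodule Rᵐᵒᵖ X) (y : R) : Submodule Rᵐᵒᵖ X where
  carrier := {x | ∀ r : R, op (r * y) • x ∈ C}
  add_mem' hx hx' r := by
    rw [smul_add]
    exact C.add_mem (hx r) (hx' r)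
  zero_mem' r := by simp
  smul_mem' s x hx r := by
    rw [← op_unop s, ← op_smul_mul, ← mul_assoc]
    exact hx _

theorem IsSubbimodule.rightResidual (hC : IsSubbimodule T C) (y : R) :
    IsSubbimodule T (rightResidual C y) := fun t x hx r => by
  rw [← smul_comm]
  exact hC t _ (hx r)

theorem isPrimeIdeal_rightAnn (hC : IsSubbimodule T C) (hG : IsSubbimodule T G) (hCG : C < G)
    (h : ∀ G' ∈ subbimoduleIoc T C G, rightAnn C G' = rightAnn C G) :
    IsPrimeIdeal (rightAnn C G) := by
  refine ⟨twoSided_rightAnn, fun htop => hCG.not_ge (rightAnn_eq_top_iff.1 htop), ?_⟩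
  intro x y hxy
  refine or_iff_not_imp_left.2 fun hx => ?_
  simp only [mem_rightAnn, not_forall] at hx
  obtain ⟨w, hwG, hwC⟩ := hx
  have hmem : G ⊓ rightResidual C y ∈ subbimoduleIoc T C G := by
    refine ⟨hG.inf (hC.rightResidual y), SetLike.lt_iff_le_and_exists.2
      ⟨fun v hv => ⟨hCG.le hv, fun r => C.smul_mem _ hv⟩, op x • w,
        ⟨G.smul_mem _ hwG, fun r => ?_⟩, hwC⟩, inf_le_left⟩
    rw [← op_smul_mul, ← mul_assoc]
    exact hxy r w hwG
  rw [← h _ hmem]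
  intro v hv
  simpa using hv.2 1

end RightAnn

section LeftAnn

variable {S : Type u} [Ring S] [Module S X]

variable (S) in
/-- The left annihilator of the subquotient `(G + C) / C` of an `S`-`R`-bimodule, as a right ideal
of `S`; the extra factor `t` makes it one without assuming that `G` is stable under `S`. -/
def leftAnn (C G : Submodule Rᵐᵒᵖ X) : RightIdeal S where
  carrier := {s | ∀ x ∈ G, ∀ t : S, (s * t) • x ∈ C}
  add_mem' hs hs' x hx t := by
    rw [add_mul, add_smul]
    exact C.add_mem (hs x hx t) (hs' x hx t)
  zero_mem' x _ t := by simp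
  smul_mem' r s hs x hx t := by
    rw [← op_unop r, op_smul_eq_mul, mul_assoc]
    exact hs x hx _

theorem smul_mem_of_mem_leftAnn {s : S} (hs : s ∈ leftAnn S C G) {x : X} (hx : x ∈ G) :
    s • x ∈ C := by
  simpa using hs x hx 1

theorem IsSubbimodule.mem_leftAnn (hG : IsSubbimodule S G) {s : S} :
    s ∈ leftAnn S C G ↔ ∀ x ∈ G, s • x ∈ C := by
  refine ⟨fun hs x hx => smul_mem_of_mem_leftAnn hs hx, fun hs x hx t => ?_⟩
  rw [mul_smul]
  exact hs _ (hG t x hx)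

theorem IsSubbimodule.twoSided_leftAnn (hC : IsSubbimodule S C) : TwoSided (leftAnn S C G) :=
  fun r s hs x hx t => by
    rw [mul_assoc, mul_smul]
    exact hC r _ (hs x hx t)

theorem leftAnn_mono_left {C C' : Submodule Rᵐᵒᵖ X} (h : C ≤ C') :
    leftAnn S C G ≤ leftAnn S C' G :=
  fun _ hs x hx t => h (hs x hx t)

theorem leftAnn_antitone : Antitone (leftAnn S C) := fun _ _ h _ hs x hx => hs x (h hx)

theorem one_notMem_leftAnn (hCG : C < G) : (1 : S) ∉ leftAnn S C G := fun h =>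
  hCG.not_ge fun x hx => by simpa using smul_mem_of_mem_leftAnn h hx

variable (S) in
/-- Every nonzero sub-bimodule of `G / C` is essential as a left `S`-submodule. -/
def SubbimodulesLeftEssential (C G : Submodule Rᵐᵒᵖ X) : Prop :=
  ∀ G' ∈ subbimoduleIoc S C G, ∀ x ∈ G, x ∉ C → ∃ s : S, s • x ∈ G' ∧ s • x ∉ C

theorem SubbimodulesLeftEssential.of_le {G' : Submodule Rᵐᵒᵖ X}
    (h : SubbimodulesLeftEssential S C G) (hle : G' ≤ G) : SubbimodulesLeftEssential S C G' :=
  fun _ hG x hx => h _ (subbimoduleIoc_mono hle hG) x (hle hx)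

theorem exists_subbimodulesLeftEssential [IsNoetherian S X] (hD : IsSubbimodule S D)
    (hCD : C < D) : ∃ G ∈ subbimoduleIoc S C D, SubbimodulesLeftEssential S C G := by
  obtain ⟨Y, ⟨G, hG, hYG⟩, hmax⟩ := exists_maximal_of_wellFoundedGT
    (fun Y : Submodule S X => ∃ G ∈ subbimoduleIoc S C D, ∀ x ∈ Y, x ∈ G → x ∈ C)
    ⟨⊥, D, ⟨hD, hCD, le_rfl⟩, fun x hx _ => by simp [(Submodule.mem_bot S).1 hx]⟩
  refine ⟨G, hG, fun G' hG' x hxG hxC => ?_⟩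
  by_contra! hno
  have havoid : ∀ v ∈ Y ⊔ Submodule.span S {x}, v ∈ G' → v ∈ C := by
    intro v hv hvG'
    obtain ⟨y, hy, _, hz, rfl⟩ := Submodule.mem_sup.1 hv
    obtain ⟨s, rfl⟩ := Submodule.mem_span_singleton.1 hz
    have hyC : y ∈ C :=
      hYG y hy ((G.add_mem_iff_left (hG.1 s x hxG)).1 (hG'.2.2 hvG'))
    exact C.add_mem hyC (hno s ((G'.add_mem_iff_right (hG'.2.1.le hyC)).1 hvG'))
  have hle := hmax ⟨G', subbimoduleIoc_mono hG.2.2 hG', havoid⟩ le_sup_left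
  exact hxC (hYG x (hle (Submodule.mem_sup_right (Submodule.mem_span_singleton_self x))) hxG)

variable [SMulCommClass S Rᵐᵒᵖ X]

/-- The residual `{x | y S x ⊆ C}`; for `y = 1` it is the largest sub-bimodule contained in `C`. -/
def leftResidual (C : Submodule Rᵐᵒᵖ X) (y : S) : Submodule Rᵐᵒᵖ X where
  carrier := {x | ∀ s : S, (y * s) • x ∈ C}
  add_mem' hx hx' s := by
    rw [smul_add]
    exact C.add_mem (hx s) (hx' s)
  zero_mem' s := by simp
  smul_mem' r x hx s := by
    rw [smul_comm]
    exact C.smul_mem r (hx s)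

theorem isSubbimodule_leftResidual (C : Submodule Rᵐᵒᵖ X) (y : S) :
    IsSubbimodule S (leftResidual C y) := fun t x hx s => by
  rw [smul_smul, mul_assoc]
  exact hx _

theorem isPrimeIdeal_leftAnn (hC : IsSubbimodule S C) (hG : IsSubbimodule S G) (hCG : C < G)
    (h : ∀ G' ∈ subbimoduleIoc S C G, leftAnn S C G' = leftAnn S C G) :
    IsPrimeIdeal (leftAnn S C G) := by
  refine ⟨hC.twoSided_leftAnn, fun htop => one_notMem_leftAnn hCG (htop.ge trivial), ?_⟩
  intro x y hxy
  refine or_iff_not_imp_right.2 fun hy => ?_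
  simp only [hG.mem_leftAnn, not_forall] at hy
  obtain ⟨w, hwG, hwC⟩ := hy
  have hmem : G ⊓ leftResidual C x ∈ subbimoduleIoc S C G := by
    refine ⟨hG.inf (isSubbimodule_leftResidual C x), SetLike.lt_iff_le_and_exists.2
      ⟨fun v hv => ⟨hCG.le hv, fun s => hC _ v hv⟩, y • w, ⟨hG _ _ hwG, fun s => ?_⟩, hwC⟩,
      inf_le_left⟩
    rw [smul_smul]
    exact smul_mem_of_mem_leftAnn (hxy s) hwG
  rw [← h _ hmem]
  exact fun v hv t => hv.2 t

theorem SubbimodulesLeftEssential.leftAnn_lt [IsNoetherian Rᵐᵒᵖ X]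
    (h : SubbimodulesLeftEssential S C G) (hG : IsSubbimodule S G) (hCG : C < G)
    {G' : Submodule Rᵐᵒᵖ X} (hG' : G' ∈ subbimoduleIoc S C G) :
    leftAnn S C G < leftAnn S G' G := by
  have hCG' : C ≤ G' := hG'.2.1.le
  suffices hs : ∃ s ∉ leftAnn S C G, ∀ x ∈ G, s • x ∈ G' by
    obtain ⟨s, hs, hsG⟩ := hs
    exact SetLike.lt_iff_le_and_exists.2
      ⟨leftAnn_mono_left hCG', s, hG.mem_leftAnn.2 hsG, hs⟩
  refine induction_Icc_of_exists_gt
    (P := fun n => ∃ s ∉ leftAnn S C G, ∀ x ∈ n, s • x ∈ G') hG'.2.2 ?_ ?_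
  · exact ⟨1, one_notMem_leftAnn hCG, fun x hx => by rwa [one_smul]⟩
  · rintro n - hnG ⟨s, hs, hsn⟩
    obtain ⟨x, hxG, hxn⟩ := SetLike.exists_of_lt hnG
    obtain ⟨s', hs', hs'n, hs'x⟩ :
        ∃ s' ∉ leftAnn S C G, (∀ y ∈ n, s' • y ∈ G') ∧ s' • x ∈ G' := by
      by_cases hsx : s • x ∈ C
      · exact ⟨s, hs, hsn, hCG' hsx⟩
      · obtain ⟨t, htG', htC⟩ := h G' hG' (s • x) (hG s x hxG) hsx
        rw [smul_smul] at htG' htC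
        refine ⟨t * s, fun hts => htC (smul_mem_of_mem_leftAnn hts hxG), fun y hy => ?_, htG'⟩
        rw [mul_smul]
        exact hG'.1 t _ (hsn y hy)
    refine ⟨n ⊔ Submodule.span Rᵐᵒᵖ {x}, le_sup_left.lt_of_not_ge fun hle =>
      hxn (hle (Submodule.mem_sup_right (Submodule.mem_span_singleton_self x))),
      sup_le hnG.le ((Submodule.span_singleton_le_iff_mem x G).2 hxG), s', hs', fun v hv => ?_⟩
    obtain ⟨y, hy, _, hz, rfl⟩ := Submodule.mem_sup.1 hv
    obtain ⟨r, rfl⟩ := Submodule.mem_span_singleton.1 hz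
    rw [smul_add, smul_comm]
    exact G'.add_mem (hs'n y hy) (G'.smul_mem r hs'x)

end LeftAnn

end Bimodule

/-! ### Prime ideals and full boundedness -/

section Prime

variable {α : Ordinal.{u}} {R : Type u} [Ring R] {p E : RightIdeal R}

theorem IsPrimeIdeal.isEssentialIn (hp : IsPrimeIdeal p) (hE : TwoSided E) (hpE : p < E) :
    IsEssentialIn p ⊤ E := by
  intro z hpz _
  obtain ⟨e, heE, hep⟩ := SetLike.exists_of_lt hpE
  obtain ⟨x, hxz, hxp⟩ := SetLike.exists_of_lt hpz
  obtain ⟨r, hr⟩ : ∃ r, x * r * e ∉ p := by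
    by_contra! h
    exact (hp.2.2 x e h).elim hxp hep
  refine SetLike.lt_iff_le_and_exists.2
    ⟨le_inf hpE.le hpz.le, x * r * e, ⟨hE (x * r) e heE, ?_⟩, hr⟩
  rw [mul_assoc]
  exact z.smul_mem (op (r * e)) hxz

theorem IsPrimeIdeal.rightAnn_le (hp : IsPrimeIdeal p) (hE : ¬ E ≤ p) : rightAnn p E ≤ p := by
  intro r hr
  obtain ⟨x, hxE, hxp⟩ := SetLike.not_le_iff_exists.1 hE
  exact (hp.2.2 x r fun s => hr (x * s) (E.smul_mem (op s) hxE)).resolve_left hxp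

theorem TwoSided.inf {I J : RightIdeal R} (hI : TwoSided I) (hJ : TwoSided J) :
    TwoSided (I ⊓ J) :=
  fun r x hx => ⟨hI r x hx.1, hJ r x hx.2⟩

theorem IsPrimeIdeal.exists_twoSided_le_of_finset (hp : IsPrimeIdeal p) {ι : Type*}
    (t : Finset ι) {N : ι → RightIdeal R} (h : ∀ i ∈ t, ∃ A, TwoSided A ∧ p < A ∧ A ≤ N i) :
    ∃ A, TwoSided A ∧ p < A ∧ A ≤ t.inf N := by
  classical
  induction t using Finset.induction with
  | empty => exact ⟨⊤, fun _ _ _ => trivial, lt_top_iff_ne_top.2 hp.2.1, le_top⟩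
  | insert i t _ ih =>
    obtain ⟨A, hA, hpA, hAi⟩ := h i (Finset.mem_insert_self i t)
    obtain ⟨B, hB, hpB, hBt⟩ := ih fun j hj => h j (Finset.mem_insert_of_mem hj)
    rw [Finset.inf_insert]
    exact ⟨A ⊓ B, hA.inf hB, hp.isEssentialIn hA hpA B hpB le_top, inf_le_inf hAi hBt⟩

theorem IsPrimeIdeal.devLT_of_isEssentialIn [IsNoetherianRing R] (hp : IsPrimeIdeal p)
    (h : DevLE α (Set.Icc p ⊤)) (hpE : p ≤ E) (hE : IsEssentialIn p ⊤ E) :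
    DevLT α (Set.Icc E ⊤) := by
  classical
  -- Annihilators of elements `u` of a critical `U` intersect irredundantly in `p`; by criticality
  -- each `R / k u ≃ (u R + p) / p ⊆ U / p` loses deviation modulo a nonzero submodule.
  obtain ⟨U, hpU, -, hcrit⟩ := exists_critical_Icc (lt_top_iff_ne_top.2 hp.2.1) h
  let k : R → RightIdeal R := fun u => p.comap (orbitMap u)
  have hpk : ∀ u, p ≤ k u := fun u r hr => hp.1 u r hr
  obtain ⟨t₀, ht₀U, ht₀⟩ := exists_finsetInf_le_rightAnn (T := R) (C := p) (D := U) hp.1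
  obtain ⟨t, ⟨htU, htp⟩, hmin⟩ := exists_minimal_of_wellFoundedLT
    (fun t : Finset R => ↑t ⊆ (U : Set R) ∧ t.inf k ≤ p)
    ⟨t₀, ht₀U, ht₀.trans (hp.rightAnn_le hpU.not_ge)⟩
  refine DevLT.Icc_top_of_finsetInf_le (htp.trans hpE) fun u hu => ?_
  have hnle : ¬ (t.erase u).inf k ≤ p := fun hle => Finset.notMem_erase u t <|
    hmin ⟨fun _ hx => htU (Finset.mem_of_mem_erase hx), hle⟩ (Finset.erase_subset u t) hu
  have hlt : p < (t.erase u).inf k :=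
    (Finset.le_inf fun v _ => hpk v).lt_of_not_ge hnle
  obtain ⟨y, hy, hyp⟩ := SetLike.exists_of_lt (hE _ hlt le_top)
  have hyu : y ∉ k u := fun hyu => hyp <| htp <| by
    rw [← Finset.insert_erase hu, Finset.inf_insert]
    exact ⟨hyu, hy.2⟩
  set J := E ⊓ (t.erase u).inf k
  have hJU : J.map (orbitMap u) ⊔ p ≤ U := by
    refine sup_le ?_ hpU.le
    rintro _ ⟨r, -, rfl⟩
    exact U.smul_mem (op r) (htU hu)
  have hcritJ := hcrit (J.map (orbitMap u) ⊔ p)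
    (le_sup_right.lt_of_not_ge fun hle => hyu (hle (Submodule.mem_sup_left ⟨y, hy, rfl⟩))) hJU
  rw [← comap_orbitMap_eq_top (htU hu)]
  exact (hcritJ.comap hJU (orbitMap u)).Icc_mono (comap_map_sup_le _ J p) le_rfl

variable {X : Type u} [AddCommGroup X] [Module Rᵐᵒᵖ X] {a b : Submodule Rᵐᵒᵖ X}

theorem RightFullyBounded.devLT_of_forall_rightAnn_le [IsNoetherianRing R]
    (hfb : RightFullyBounded R) (hp : IsPrimeIdeal p) (h : DevLT α (Set.Icc a b)) (hab : a < b)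
    (hpab : p ≤ rightAnn a b) (hff : ∀ n, a < n → n ≤ b → rightAnn a n ≤ p) :
    DevLT α (Set.Icc p ⊤) := by
  obtain ⟨w, hwb, hwa⟩ := SetLike.exists_of_lt hab
  let K : RightIdeal R := a.comap (orbitMap w)
  have hpK : p ≤ K := fun r hr => hpab hr w hwb
  obtain ⟨J, hpJ, hKJ⟩ : ∃ J, p < J ∧ ¬ p < K ⊓ J := by
    by_contra! hess
    obtain ⟨A, hA, hpA, hAK⟩ := hfb p hp K hpK hess
    set n := Submodule.span Rᵐᵒᵖ (insert w (a : Set X))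
    have hann : A ≤ rightAnn a n := by
      refine hA.le_rightAnn_span fun x hx => ?_
      obtain rfl | hxa := hx
      exacts [hAK, (comap_orbitMap_eq_top hxa).ge.trans' le_top]
    have han : a < n := SetLike.lt_iff_le_and_exists.2
      ⟨fun x hx => Submodule.subset_span (Set.mem_insert_of_mem w hx), w,
        Submodule.subset_span (Set.mem_insert w _), hwa⟩
    exact hpA.not_ge <| hann.trans <| hff n han <|
      Submodule.span_le.2 (Set.insert_subset hwb hab.le)
  have hJK : J ⊓ K ≤ p := (inf_comm J K).le.trans
    ((le_inf hpK hpJ.le).eq_of_not_lt hKJ).ge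
  have hK : DevLT α (Set.Icc K ⊤) := by
    rw [← comap_orbitMap_eq_top hwb]
    exact h.comap hab.le _
  have hpJ' : DevLT α (Set.Icc p J) :=
    (hK.Icc_inf_left le_top J).Icc_mono hJK (le_inf le_rfl le_top)
  exact (hpJ'.rightAnn (T := R) hpJ.le hp.1).Icc_mono (hp.rightAnn_le hpJ.not_ge) le_rfl

theorem RightFullyBounded.devLT_rightAnn [IsNoetherianRing R] [IsNoetherian Rᵐᵒᵖ R]
    [IsNoetherian Rᵐᵒᵖ X] (hfb : RightFullyBounded R) (h : DevLT α (Set.Icc a b)) (hab : a ≤ b) :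
    DevLT α (Set.Icc (rightAnn a b) ⊤) := by
  refine induction_Icc_of_exists_gt (P := fun n => DevLT α (Set.Icc (rightAnn a n) ⊤)) hab ?_ ?_
  · rw [rightAnn_eq_top_iff.2 le_rfl]
    exact devLT_Icc_of_le le_rfl
  · intro n han hnb hn
    obtain ⟨G, ⟨-, hnG, hGb⟩, hG⟩ := exists_mem_subbimoduleIoc_eq_of_antitone
      (T := ℤ) (rightAnn_antitone (a := n)) (isSubbimodule_int b) hnb
    have hprime := isPrimeIdeal_rightAnn (isSubbimodule_int n) (isSubbimodule_int G) hnG hG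
    have hQ := hfb.devLT_of_forall_rightAnn_le hprime (h.Icc_mono han hGb) hnG le_rfl
      fun G' hnG' hG'G => (hG G' ⟨isSubbimodule_int G', hnG', hG'G⟩).le
    exact ⟨G, hnG, hGb, hn.rightAnn_trans hQ han⟩

end Prime

/-! ### Transfer of deviation along bimodules -/

section Transfer

variable {α : Ordinal.{u}}

theorem IsEssentialIn.of_le_left {L : Type*} [Lattice L] [IsModularLattice L] {q a b e : L}
    (h : IsEssentialIn a b e) (hqa : q ≤ a) (hab : a ≤ b) (hae : a ≤ e) :
    IsEssentialIn q b e := by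
  intro z hqz hzb
  by_cases hza : z ≤ a
  · rwa [inf_of_le_right (hza.trans hae)]
  · have hlt := h (a ⊔ z) (left_lt_sup.2 hza) (sup_le hab hzb)
    rw [inf_comm, sup_inf_assoc_of_le z hae] at hlt
    refine (le_inf (hqa.trans hae) hqz.le).lt_of_not_ge fun hle => (left_lt_sup.1 hlt) ?_
    exact (inf_comm z e).le.trans (hle.trans hqa)

variable {S R : Type u} [Ring S] [Ring R] {X : Type u} [AddCommGroup X] [Module S X]
  [Module Rᵐᵒᵖ X] [SMulCommClass S Rᵐᵒᵖ X] {C D G E : Submodule Rᵐᵒᵖ X}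

theorem RightFullyBounded.exists_mem_subbimoduleIoc_le [IsNoetherian Rᵐᵒᵖ X]
    (hfb : RightFullyBounded R) (hQ : IsPrimeIdeal (rightAnn C G)) (hC : IsSubbimodule S C)
    (hG : IsSubbimodule S G) (hCE : C ≤ E) (hEG : E ≤ G) (hE : IsEssentialIn C G E) :
    ∃ G' ∈ subbimoduleIoc S C G, G' ≤ E := by
  have hCG := hCE.trans hEG
  obtain ⟨t, rfl⟩ := IsNoetherian.noetherian G
  set G := Submodule.span Rᵐᵒᵖ (t : Set X)
  obtain ⟨A, hA, hQA, hAE⟩ := hQ.exists_twoSided_le_of_finset t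
    (N := fun g => E.comap (orbitMap g)) fun g hg => by
      have hgG : g ∈ G := Submodule.subset_span hg
      have hess := hE.comap hCE hCG (orbitMap g)
      rw [comap_orbitMap_eq_top hgG] at hess
      have hQg : rightAnn C G ≤ C.comap (orbitMap g) := fun r hr => hr g hgG
      have hCEg := Submodule.comap_mono (f := orbitMap g) hCE
      exact hfb _ hQ _ (hQg.trans hCEg) fun J hJ =>
        hess.of_le_left hQg le_top hCEg J hJ le_top
  have hGA : A ≤ rightAnn E G :=
    hA.le_rightAnn_span fun g hg r hr => Submodule.mem_finsetInf.1 (hAE hr) g hg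
  obtain ⟨r, hrA, hrQ⟩ := SetLike.exists_of_lt hQA
  simp only [mem_rightAnn, not_forall] at hrQ
  obtain ⟨x, hxG, hxC⟩ := hrQ
  have hcoreE : leftResidual E (1 : S) ≤ E := fun v hv => by simpa using hv 1
  refine ⟨leftResidual E (1 : S), ⟨isSubbimodule_leftResidual E 1,
    SetLike.lt_iff_le_and_exists.2 ⟨fun v hv s => hCE (hC _ v hv), op r • x, fun s => ?_, hxC⟩,
    hcoreE.trans hEG⟩, hcoreE⟩
  rw [smul_comm]
  exact hGA hrA _ (hG _ x hxG)

theorem RightFullyBounded.devLE_Icc_of_subbimodule [IsNoetherian Rᵐᵒᵖ X]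
    (hfb : RightFullyBounded R) (hQ : IsPrimeIdeal (rightAnn C G)) (hC : IsSubbimodule S C)
    (hG : IsSubbimodule S G) (h : ∀ G' ∈ subbimoduleIoc S C G, DevLT α (Set.Icc G' G)) :
    DevLE α (Set.Icc C G) := by
  refine devLE_Icc_of_essential fun E hCE hEG hE => ?_
  obtain ⟨G', hG', hG'E⟩ := hfb.exists_mem_subbimoduleIoc_le hQ hC hG hCE hEG hE
  exact (h G' hG').Icc_mono hG'E le_rfl

variable [IsNoetherian S X] [IsNoetherian Sᵐᵒᵖ S] [IsNoetherian Rᵐᵒᵖ R]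

variable (S) in
theorem exists_subbimodule_isPrimeIdeal (hC : IsSubbimodule S C) (hD : IsSubbimodule S D)
    (hCD : C < D) :
    ∃ G ∈ subbimoduleIoc S C D, IsPrimeIdeal (leftAnn S C G) ∧ IsPrimeIdeal (rightAnn C G) ∧
      SubbimodulesLeftEssential S C G := by
  obtain ⟨G₀, hG₀, hleft⟩ :=
    exists_mem_subbimoduleIoc_eq_of_antitone (leftAnn_antitone (S := S) (C := C)) hD hCD
  obtain ⟨G₁, hG₁, hess⟩ := exists_subbimodulesLeftEssential hG₀.1 hG₀.2.1
  obtain ⟨G₂, hG₂, hright⟩ :=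
    exists_mem_subbimoduleIoc_eq_of_antitone (rightAnn_antitone (a := C)) hG₁.1 hG₁.2.1
  have hG₂₀ := subbimoduleIoc_mono hG₁.2.2 hG₂
  refine ⟨G₂, subbimoduleIoc_mono hG₀.2.2 hG₂₀, ?_,
    isPrimeIdeal_rightAnn hC hG₂.1 hG₂.2.1 hright, hess.of_le hG₂.2.2⟩
  rw [hleft G₂ hG₂₀]
  exact isPrimeIdeal_leftAnn hC hG₀.1 hG₀.2.1 hleft

theorem RightFullyBounded.devLT_of_leftAnn [IsNoetherianRing S] [IsNoetherian Rᵐᵒᵖ X]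
    (hfb : RightFullyBounded R) (hC : IsSubbimodule S C) (hD : IsSubbimodule S D) (hCD : C ≤ D)
    (h : DevLT α (Set.Icc (leftAnn S C D) ⊤)) : DevLT α (Set.Icc C D) := by
  induction α using WellFoundedLT.induction generalizing C D with
  | ind α ih =>
    refine (induction_Icc_of_exists_gt
      (P := fun n => IsSubbimodule S n ∧ DevLT α (Set.Icc C n)) hCD
      ⟨hC, devLT_Icc_of_le le_rfl⟩ ?_).2
    rintro n hCn hnD ⟨hn, hdev⟩
    obtain ⟨G, ⟨hG, hnG, hGD⟩, hP, hQ, hess⟩ := exists_subbimodule_isPrimeIdeal S hn hD hnD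
    have hle : leftAnn S C D ≤ leftAnn S n G :=
      (leftAnn_mono_left hCn).trans (leftAnn_antitone hGD)
    obtain hbot | ⟨β, hβ, hPβ⟩ := h.Icc_mono hle le_rfl
    · exact absurd (Subtype.mk_lt_mk.2 (lt_top_iff_ne_top.2 hP.2.1))
        (hbot ⟨leftAnn S n G, le_rfl, le_top⟩ ⟨⊤, le_top, le_rfl⟩)
    have hG' : ∀ G' ∈ subbimoduleIoc S n G, DevLT β (Set.Icc G' G) := by
      intro G' hG'
      have hlt := hess.leftAnn_lt hG hnG hG'
      exact ih β hβ hG'.1 hG hG'.2.2 <| hP.devLT_of_isEssentialIn hPβ hlt.le <|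
        hP.isEssentialIn hG'.1.twoSided_leftAnn hlt
    have hnGdev : DevLT α (Set.Icc n G) := .inr ⟨β, hβ, hfb.devLE_Icc_of_subbimodule hQ hn hG hG'⟩
    exact ⟨G, hnG, hGD, hG, hdev.Icc_trans hnGdev hCn hnG.le⟩

end Transfer

/-! ### Critical modules -/

section Critical

variable {R : Type u} [Ring R] {X : Type u} [AddCommGroup X] [Module Rᵐᵒᵖ X]

theorem devLE_rKdim [IsNoetherian Rᵐᵒᵖ X] : DevLE (rKdim R X) (Submodule Rᵐᵒᵖ X) :=
  csInf_mem (s := {α : Ordinal.{u} | DevLE α (Submodule Rᵐᵒᵖ X)}) (exists_devLE _)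

theorem not_devLT_rKdim [Nontrivial X] : ¬ DevLT (rKdim R X) (Submodule Rᵐᵒᵖ X) := by
  rintro (h | ⟨β, hβ, h⟩)
  · exact h ⊥ ⊤ bot_lt_top
  · exact hβ.not_ge (csInf_le' h)

theorem devLE_quotient_iff {α : Ordinal.{u}} {N : Submodule Rᵐᵒᵖ X} :
    DevLE α (Submodule Rᵐᵒᵖ (X ⧸ N)) ↔ DevLE α (Set.Icc N ⊤) := by
  rw [Set.Icc_top]
  exact devLE_congr (Submodule.comapMkQRelIso N)

variable {q : RightIdeal R}

theorem FullyFaithfulOver.annSet_eq [Nontrivial X] (h : FullyFaithfulOver R q X) :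
    annSet R X = (q : Set R) :=
  Set.Subset.antisymm (fun _ hr => (h.2 ⊤ top_ne_bot).le fun x _ => hr x) h.1

variable [IsNoetherian Rᵐᵒᵖ X]

theorem IsCriticalMod.devLT_Icc_top (hX : IsCriticalMod R X) {N : Submodule Rᵐᵒᵖ X}
    (hN : N ≠ ⊥) : DevLT (rKdim R X) (Set.Icc N ⊤) :=
  .inr ⟨_, hX.2 N hN, devLE_quotient_iff.1 devLE_rKdim⟩

theorem IsCriticalMod.not_devLT_Icc_bot (hX : IsCriticalMod R X) {N : Submodule Rᵐᵒᵖ X}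
    (hN : N ≠ ⊥) : ¬ DevLT (rKdim R X) (Set.Icc ⊥ N) := by
  have := hX.1
  intro h
  have htop := h.Icc_trans (hX.devLT_Icc_top hN) bot_le le_top
  exact not_devLT_rKdim (R := R) (X := X) <|
    htop.of_strictMono (g := fun x => ⟨x, bot_le, le_top⟩) fun _ _ hxy => hxy

theorem IsCriticalMod.isUniformMod (hX : IsCriticalMod R X) : IsUniformMod R X := by
  intro N N' hN hN' hinf
  refine hX.not_devLT_Icc_bot hN ?_
  have h := (hX.devLT_Icc_top hN').Icc_inf_left le_top N
  rwa [hinf, inf_top_eq] at h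

variable [IsNoetherianRing R]

theorem FullyFaithfulOver.rKdim_eq [Nontrivial X] (h : FullyFaithfulOver R q X)
    (hfb : RightFullyBounded R) (hq : IsPrimeIdeal q) : rKdim R X = rKdim R (R ⧸ q) := by
  have hq_le : q ≤ rightAnn (⊥ : Submodule Rᵐᵒᵖ X) ⊤ := fun r hr x _ => h.1 hr x
  unfold rKdim
  congr 1
  ext α
  simp only [Set.mem_ofPred_eq]
  rw [devLE_quotient_iff, ← devLE_Icc_bot_top_iff, ← devLT_succ_iff, ← devLT_succ_iff]
  exact ⟨fun hα => hfb.devLT_of_forall_rightAnn_le hq hα bot_lt_top hq_le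
      fun N hN _ => (h.2 N hN.ne_bot).le,
    fun hα => hα.of_le_rightAnn hq_le bot_le⟩

variable [IsNoetherian Rᵐᵒᵖ R]

theorem IsCriticalMod.le_rightAnn (hX : IsCriticalMod R X) (hfb : RightFullyBounded R)
    (hq : TwoSided q) {N : Submodule Rᵐᵒᵖ X} (hN : N ≠ ⊥) (hNq : q ≤ rightAnn ⊥ N) :
    q ≤ rightAnn (⊥ : Submodule Rᵐᵒᵖ X) ⊤ := by
  set C : RightIdeal R := q ⊓ rightAnn (⊥ : Submodule Rᵐᵒᵖ X) ⊤
  have hC : TwoSided C := hq.inf twoSided_rightAnn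
  have hIq : rightAnn N ⊤ ≤ leftAnn R C q := by
    intro s hs x hx t
    refine ⟨hq _ x hx, fun v _ => ?_⟩
    rw [smul_eq_mul, mul_assoc, op_smul_mul]
    exact hNq (hq t x hx) _ (hs v trivial)
  have hI : DevLT (rKdim R X) (Set.Icc (rightAnn N ⊤) ⊤) :=
    hfb.devLT_rightAnn (hX.devLT_Icc_top hN) le_top
  have hCq : DevLT (rKdim R X) (Set.Icc C q) :=
    hfb.devLT_of_leftAnn (S := R) hC hq inf_le_left (hI.Icc_mono hIq le_rfl)
  intro r hr w _
  have hCw : C.map (orbitMap w) ≤ ⊥ := by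
    rintro _ ⟨s, hs, rfl⟩
    exact hs.2 w trivial
  have hqw : q.map (orbitMap w) = ⊥ := by
    by_contra hne
    exact hX.not_devLT_Icc_bot hne
      (hCq.Icc_of_map inf_le_left (orbitMap w) hCw le_sup_right)
  exact hqw.le ⟨r, hr, rfl⟩

theorem IsCriticalMod.fullyFaithfulOver (hX : IsCriticalMod R X) (hfb : RightFullyBounded R)
    (hq : IsAssocPrime R q X) : FullyFaithfulOver R q X := by
  obtain ⟨hprime, N, hN, hNq⟩ := hq
  have hann : q ≤ rightAnn (⊥ : Submodule Rᵐᵒᵖ X) ⊤ :=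
    hX.le_rightAnn hfb hprime.1 hN (hNq N le_rfl hN).ge
  refine ⟨fun r hr x => hann hr x trivial, fun N' hN' => Set.Subset.antisymm ?_
    fun r hr x _ => hann hr x trivial⟩
  rw [← hNq (N' ⊓ N) inf_le_right (hX.isUniformMod N' N hN' hN)]
  exact fun r hr x hx => hr x hx.1

theorem stmt_13_general (hfb : RightFullyBounded R) (hq : IsAssocPrime R q X)
    (hcrit : IsCriticalMod R X) :
    annSet R X = (q : Set R) ∧ FullyFaithfulOver R q X ∧ rKdim R X = rKdim R (R ⧸ q) := by
  have := hcrit.1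
  have hff := hcrit.fullyFaithfulOver hfb hq
  exact ⟨hff.annSet_eq, hff, hff.rKdim_eq hfb hq.1⟩

end Critical

theorem IsAssocPrime.of_submodule {R : Type u} [Ring R] {q : RightIdeal R} {M : Type u}
    [AddCommGroup M] [Module Rᵐᵒᵖ M] (hq : IsAssocPrime R q M) (huni : IsUniformMod R M)
    {W : Submodule Rᵐᵒᵖ M} (hW : W ≠ ⊥) : IsAssocPrime R q W := by
  obtain ⟨hprime, N, hN, hNq⟩ := hq
  refine ⟨hprime, N.comap W.subtype, fun h => huni W N hW hN ?_, fun N' hN' hne => ?_⟩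
  · rw [← Submodule.map_comap_subtype, h, Submodule.map_bot]
  · rw [← hNq (N'.map W.subtype) (Submodule.map_le_iff_le_comap.2 hN')
      fun h => hne (Submodule.map_injective_of_injective W.injective_subtype <|
        h.trans (Submodule.map_bot _).symm)]
    ext r
    simp [annSubSet, Subtype.ext_iff]

/-- Every cyclic critical submodule `W` of a cyclic uniform module `M = R/A`
with assassinator `q` has annihilator exactly `q`, is fully faithful over
`R/q`, and `Kdim W = Kdim R/q`. -/
theorem stmt_13 {R : Type u} [Ring R] (hpr : IsPrimeRing R)
    [IsNoetherianRing R] [IsNoetherian Rᵐᵒᵖ R] (hfb : RightFullyBounded R)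
    (A : RightIdeal R) (q : RightIdeal R) (m : Ordinal.{u})
    (huni : IsUniformMod R (R ⧸ A))
    (hass : IsAssocPrime R q (R ⧸ A) ∧
      ∀ q' : RightIdeal R, IsAssocPrime R q' (R ⧸ A) → q' = q)
    (hkdim : rKdim R (R ⧸ A) = m)
    (W : Submodule Rᵐᵒᵖ (R ⧸ A))
    (hcyc : ∃ w : R ⧸ A, W = Submodule.span Rᵐᵒᵖ {w})
    (hcrit : IsCriticalMod R ↥W) :
    annSet R ↥W = (q : Set R) ∧ FullyFaithfulOver R q ↥W ∧
      rKdim R ↥W = rKdim R (R ⧸ q) := by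
  have hW : W ≠ ⊥ := Submodule.nontrivial_iff_ne_bot.1 hcrit.1
  exact stmt_13_general hfb (hass.1.of_submodule huni hW) hcrit
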